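/- Let S = K[Y_1,...,Y_n], I ⊆ S a monomial ideal with minimal monomial generating set G(I), R = S/I, and y = y_{i_1}···y_{i_r} with i_1 < ... < i_r, F = {i_1,...,i_r}. For b ∈ ℤ^n with G_b = {j : b_j < 0}, the ℤ^n-graded component (R_y)_b is isomorphic to K (equivalently, nonzero) if and only if F ⊇ G_b and for every u ∈ G(I) there exists j ∉ F with ν_j(u) > b_j ≥ 0. -/

import Mathlib

noncomputable section
set_option synthInstance.maxHeartbeats 400000
set_option maxHeartbeats 1000000

open MvPolynomial

variable {K : Type*} [Field K] {n : ℕ}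

/-- The `b`-th `ℤⁿ`-graded component of the localization `R_y` of `R = S/I` at the image
`y` of the squarefree monomial `∏_{j ∈ F} Y_j`:  the `K`-span of all fractions `r/y^l`
with `r` the class of a homogeneous element (a monomial times a scalar) whose
`ℤⁿ`-multidegree satisfies `multideg r - l·multideg y = b`. -/
def gradedComponent (I : Ideal (MvPolynomial (Fin n) K)) (F : Finset (Fin n))
    (b : Fin n → ℤ) :
    Submodule K (Localization.Away
      (Ideal.Quotient.mk I (∏ j ∈ F, (X j : MvPolynomial (Fin n) K)))) :=
  Submodule.span K
    { z | ∃ (c : K) (d : Fin n →₀ ℕ) (l : ℕ),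
        (∀ j : Fin n, (d j : ℤ) - l * (if j ∈ F then 1 else 0) = b j) ∧
        z = Localization.mk (Ideal.Quotient.mk I (monomial d c))
          (⟨(Ideal.Quotient.mk I (∏ j ∈ F, X j)) ^ l, ⟨l, rfl⟩⟩ :
            Submonoid.powers (Ideal.Quotient.mk I (∏ j ∈ F, X j))) }

/-!
Inverting `y` makes the exponents at `F` irrelevant: the fraction of a monomial `Y^d` by a power of
`y` vanishes exactly when some generator of `I` is dominated by `d` away from `F`. Away from `F`,
the exponents of the numerator of a fraction of degree `b` are those of `b`, so this condition
depends on `b` only. Moreover two monomial fractions of the same degree are proportional, so a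
graded component is at most one-dimensional.
-/

section Exponents

variable {σ : Type*}

theorem exists_le_nsmul_add_iff (u d e : σ →₀ ℕ) :
    (∃ m : ℕ, u ≤ m • e + d) ↔ ∀ j, e j = 0 → u j ≤ d j := by
  constructor
  · rintro ⟨m, hm⟩ j hj
    simpa [hj] using hm j
  · intro h
    refine ⟨u.degree, fun j => ?_⟩
    rw [Finsupp.add_apply, Finsupp.smul_apply, smul_eq_mul]
    rcases Nat.eq_zero_or_pos (e j) with hj | hj
    · exact le_add_left (h j hj)
    · exact le_add_right ((u.le_degree j).trans (Nat.le_mul_of_pos_right _ hj))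

/-- The exponent vector of the squarefree monomial `∏_{j ∈ F} Y_j`. -/
def squarefreeExponent (F : Finset σ) : σ →₀ ℕ :=
  Finsupp.indicator F fun _ _ => 1

theorem squarefreeExponent_eq_zero_iff {F : Finset σ} {j : σ} :
    squarefreeExponent F j = 0 ↔ j ∉ F := by
  classical
  simp [squarefreeExponent, Finsupp.indicator_apply]

variable [DecidableEq σ]

/-- The multidegree of the fraction `Y^d / y^l`, where `y = ∏_{j ∈ F} Y_j`. -/
def fractionDegree (F : Finset σ) (d : σ →₀ ℕ) (l : ℕ) : σ → ℤ :=
  fun j => (d j : ℤ) - l * (if j ∈ F then 1 else 0)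

theorem fractionDegree_apply_of_notMem {F : Finset σ} {j : σ} (hj : j ∉ F)
    (d : σ →₀ ℕ) (l : ℕ) : fractionDegree F d l j = d j := by
  simp [fractionDegree, hj]

theorem fractionDegree_eq_iff {F : Finset σ} {d d' : σ →₀ ℕ} {l l' : ℕ} :
    fractionDegree F d l = fractionDegree F d' l' ↔
      l' • squarefreeExponent F + d = l • squarefreeExponent F + d' := by
  rw [funext_iff, Finsupp.ext_iff]
  refine forall_congr' fun j => ?_
  by_cases hj : j ∈ F
  · simp only [fractionDegree, squarefreeExponent, Finsupp.add_apply, Finsupp.smul_apply,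
      Finsupp.indicator_of_mem hj, if_pos hj, smul_eq_mul]
    omega
  · simp [fractionDegree_apply_of_notMem hj, squarefreeExponent_eq_zero_iff.2 hj]

theorem exists_fractionDegree_eq_iff [Finite σ] (F : Finset σ) (b : σ → ℤ) :
    (∃ d l, fractionDegree F d l = b) ↔ ∀ j, b j < 0 → j ∈ F := by
  constructor
  · rintro ⟨d, l, rfl⟩ j hj
    by_contra hjF
    rw [fractionDegree_apply_of_notMem hjF] at hj
    omega
  · intro hneg
    cases nonempty_fintype σ
    let l : ℕ := ∑ j, (b j).natAbs
    have natAbs_le (j : σ) : (b j).natAbs ≤ l :=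
      Finset.single_le_sum_of_canonicallyOrdered (f := fun j => (b j).natAbs) (Finset.mem_univ j)
    have numerator_nonneg (j : σ) : 0 ≤ b j + l * (if j ∈ F then 1 else 0) := by
      grind [natAbs_le j, hneg j]
    refine ⟨Finsupp.equivFunOnFinite.symm fun j => (b j + l * (if j ∈ F then 1 else 0)).toNat,
      l, funext fun j => ?_⟩
    rw [fractionDegree, Finsupp.equivFunOnFinite_symm_apply_apply,
      Int.toNat_of_nonneg (numerator_nonneg j), add_sub_cancel_right]

end Exponents

section Monomials

variable {R σ : Type*} [CommSemiring R]

theorem monomial_mem_span_monomial_iff {U : Set (σ →₀ ℕ)} {d : σ →₀ ℕ} {c : R} (hc : c ≠ 0) :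
    monomial d c ∈ Ideal.span ((fun u => (monomial u (1 : R) : MvPolynomial σ R)) '' U) ↔
      ∃ u ∈ U, u ≤ d := by
  classical
  simp [mem_ideal_span_monomial_image, support_monomial, hc]

theorem prod_X_eq_monomial_squarefreeExponent (F : Finset σ) :
    ∏ j ∈ F, (X j : MvPolynomial σ R) = monomial (squarefreeExponent F) 1 := by
  rw [squarefreeExponent, Finsupp.indicator_eq_sum_single F fun _ => 1, monomial_sum_one]
  rfl

theorem prod_X_pow_mul_monomial (F : Finset σ) (m : ℕ) (d : σ →₀ ℕ) (c : R) :
    (∏ j ∈ F, (X j : MvPolynomial σ R)) ^ m * monomial d c =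
      monomial (m • squarefreeExponent F + d) c := by
  rw [prod_X_eq_monomial_squarefreeExponent, monomial_pow, monomial_mul, one_pow, one_mul]

end Monomials

section Fractions

variable {R σ : Type*} [CommRing R]

/-- The fraction `c Y^d / y^l` in the localization of `R[Y] / I` at the class of
`y = ∏_{j ∈ F} Y_j`. -/
def monomialFraction (I : Ideal (MvPolynomial σ R)) (F : Finset σ) (c : R) (d : σ →₀ ℕ) (l : ℕ) :
    Localization.Away (Ideal.Quotient.mk I (∏ j ∈ F, (X j : MvPolynomial σ R))) :=
  Localization.mk (Ideal.Quotient.mk I (monomial d c))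
    ⟨Ideal.Quotient.mk I (∏ j ∈ F, X j) ^ l, l, rfl⟩

theorem smul_monomialFraction (I : Ideal (MvPolynomial σ R)) (F : Finset σ) (a c : R)
    (d : σ →₀ ℕ) (l : ℕ) :
    a • monomialFraction I F c d l = monomialFraction I F (a * c) d l := by
  rw [monomialFraction, monomialFraction, Localization.smul_mk, ← smul_eq_mul, ← smul_monomial]
  rfl

theorem monomialFraction_congr [DecidableEq σ] (I : Ideal (MvPolynomial σ R)) {F : Finset σ}
    (c : R) {d d' : σ →₀ ℕ} {l l' : ℕ} (h : fractionDegree F d l = fractionDegree F d' l') :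
    monomialFraction I F c d l = monomialFraction I F c d' l' := by
  rw [monomialFraction, monomialFraction, Localization.mk_eq_mk_iff, Localization.r_iff_exists]
  refine ⟨1, congrArg _ ?_⟩
  dsimp only
  rw [← map_pow, ← map_pow, ← map_mul, ← map_mul, prod_X_pow_mul_monomial,
    prod_X_pow_mul_monomial, fractionDegree_eq_iff.1 h]

theorem monomialFraction_eq_zero_iff_exists_mem (I : Ideal (MvPolynomial σ R)) (F : Finset σ)
    (c : R) (d : σ →₀ ℕ) (l : ℕ) :
    monomialFraction I F c d l = 0 ↔ ∃ m : ℕ, monomial (m • squarefreeExponent F + d) c ∈ I := by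
  rw [monomialFraction, Localization.mk_eq_mk', IsLocalization.mk'_eq_zero_iff]
  simp only [Subtype.exists, Submonoid.mem_powers_iff, exists_prop, exists_exists_eq_and,
    ← map_pow, ← map_mul, prod_X_pow_mul_monomial, Ideal.Quotient.eq_zero_iff_mem]

theorem monomialFraction_eq_zero_iff {I : Ideal (MvPolynomial σ R)} {U : Set (σ →₀ ℕ)}
    (hI : I = Ideal.span ((fun u => monomial u (1 : R)) '' U)) (F : Finset σ) {c : R} (hc : c ≠ 0)
    (d : σ →₀ ℕ) (l : ℕ) :
    monomialFraction I F c d l = 0 ↔ ∃ u ∈ U, ∀ j ∉ F, u j ≤ d j := by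
  calc monomialFraction I F c d l = 0
      ↔ ∃ m : ℕ, ∃ u ∈ U, u ≤ m • squarefreeExponent F + d := by
        simp only [monomialFraction_eq_zero_iff_exists_mem, hI, monomial_mem_span_monomial_iff hc]
    _ ↔ ∃ u ∈ U, ∃ m : ℕ, u ≤ m • squarefreeExponent F + d := by
        simp only [← exists_and_left, exists_comm (α := ℕ)]
    _ ↔ ∃ u ∈ U, ∀ j ∉ F, u j ≤ d j := by
        simp only [exists_le_nsmul_add_iff, squarefreeExponent_eq_zero_iff]

end Fractions

theorem nonempty_linearEquiv_self_iff_ne_bot {k V : Type*} [DivisionRing k] [AddCommGroup V]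
    [Module k V] (W : Submodule k V) [W.IsPrincipal] : Nonempty (W ≃ₗ[k] k) ↔ W ≠ ⊥ := by
  constructor
  · rintro ⟨e⟩
    exact Submodule.nontrivial_iff_ne_bot.1 e.toEquiv.nontrivial
  · obtain ⟨v, rfl⟩ := Submodule.IsPrincipal.principal W
    rw [Ne, Submodule.span_singleton_eq_bot]
    exact fun hv => ⟨(LinearEquiv.toSpanNonzeroSingleton k V v hv).symm⟩

section GradedComponent

variable (I : Ideal (MvPolynomial (Fin n) K)) {F : Finset (Fin n)} {b : Fin n → ℤ}

theorem gradedComponent_eq_span (F : Finset (Fin n)) (b : Fin n → ℤ) :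
    gradedComponent I F b = Submodule.span K
      {z | ∃ c d l, fractionDegree F d l = b ∧ z = monomialFraction I F c d l} := by
  simp only [funext_iff]
  rfl

theorem gradedComponent_fractionDegree (F : Finset (Fin n)) (d : Fin n →₀ ℕ) (l : ℕ) :
    gradedComponent I F (fractionDegree F d l) =
      Submodule.span K {monomialFraction I F 1 d l} := by
  rw [gradedComponent_eq_span]
  apply le_antisymm <;> rw [Submodule.span_le]
  · rintro _ ⟨c, d', l', h, rfl⟩
    rw [SetLike.mem_coe, Submodule.mem_span_singleton]
    exact ⟨c, by rw [smul_monomialFraction, mul_one, monomialFraction_congr I c h]⟩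
  · rw [Set.singleton_subset_iff]
    exact Submodule.subset_span ⟨1, d, l, rfl, rfl⟩

theorem gradedComponent_eq_bot (h : ¬ ∃ d l, fractionDegree F d l = b) :
    gradedComponent I F b = ⊥ := by
  rw [gradedComponent_eq_span, Submodule.span_eq_bot]
  rintro _ ⟨c, d, l, hdl, rfl⟩
  exact absurd ⟨d, l, hdl⟩ h

instance gradedComponent_isPrincipal : (gradedComponent I F b).IsPrincipal := by
  by_cases h : ∃ d l, fractionDegree F d l = b
  · obtain ⟨d, l, rfl⟩ := h
    exact ⟨_, gradedComponent_fractionDegree I F d l⟩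
  · rw [gradedComponent_eq_bot I h]
    infer_instance

variable {I}

theorem gradedComponent_fractionDegree_ne_bot_iff {U : Set (Fin n →₀ ℕ)}
    (hI : I = Ideal.span ((fun u => monomial u (1 : K)) '' U)) (F : Finset (Fin n))
    (d : Fin n →₀ ℕ) (l : ℕ) :
    gradedComponent I F (fractionDegree F d l) ≠ ⊥ ↔ ∀ u ∈ U, ∃ j ∉ F, d j < u j := by
  rw [gradedComponent_fractionDegree, Ne, Submodule.span_singleton_eq_bot,
    monomialFraction_eq_zero_iff hI F one_ne_zero]
  push Not
  rfl

theorem gradedComponent_ne_bot_iff {U : Set (Fin n →₀ ℕ)}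
    (hI : I = Ideal.span ((fun u => monomial u (1 : K)) '' U)) :
    gradedComponent I F b ≠ ⊥ ↔
      (∀ j, b j < 0 → j ∈ F) ∧ ∀ u ∈ U, ∃ j, j ∉ F ∧ b j < (u j : ℤ) ∧ 0 ≤ b j := by
  rw [← exists_fractionDegree_eq_iff]
  by_cases h : ∃ d l, fractionDegree F d l = b
  · rw [and_iff_right h]
    obtain ⟨d, l, rfl⟩ := h
    rw [gradedComponent_fractionDegree_ne_bot_iff hI]
    refine forall₂_congr fun u _ => exists_congr fun j => and_congr_right fun hj => ?_
    simp [fractionDegree_apply_of_notMem hj]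
  · simp [gradedComponent_eq_bot I h, h]

end GradedComponent

theorem stmt_11_general (I : Ideal (MvPolynomial (Fin n) K)) (U : Set (Fin n →₀ ℕ))
    (hgen : I = Ideal.span ((fun d => (monomial d (1 : K) : MvPolynomial (Fin n) K)) '' U))
    (F : Finset (Fin n)) (b : Fin n → ℤ) :
    Nonempty ((gradedComponent I F b) ≃ₗ[K] K) ↔
      ((∀ j : Fin n, b j < 0 → j ∈ F) ∧
        ∀ d ∈ U, ∃ j : Fin n, j ∉ F ∧ b j < (d j : ℤ) ∧ 0 ≤ b j) := by
  rw [nonempty_linearEquiv_self_iff_ne_bot, gradedComponent_ne_bot_iff hgen]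

/-- Takayama's Lemma.  Let `S = K[Y_1,…,Y_n]`, let `I ⊆ S` be a monomial ideal with
minimal monomial generating set `G(I)` (recorded by the exponent vectors `U`, an
antichain under divisibility), `R = S/I`, and `y = y_{i_1}⋯y_{i_r}` with
`F = {i_1,…,i_r}`.  For `b ∈ ℤⁿ`, the graded component `(R_y)_b` is isomorphic to `K`
(equivalently, nonzero) if and only if `F ⊇ G_b = {j : b_j < 0}` and for every
`u ∈ G(I)` there exists `j ∉ F` with `ν_j(u) > b_j ≥ 0`. -/
theorem stmt_11 (I : Ideal (MvPolynomial (Fin n) K)) (U : Finset (Fin n →₀ ℕ))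
    (hgen : I = Ideal.span ((fun d => (monomial d (1 : K) : MvPolynomial (Fin n) K)) '' U))
    (hmin : ∀ d ∈ U, ∀ d' ∈ U, d ≤ d' → d = d')
    (F : Finset (Fin n)) (b : Fin n → ℤ) :
    Nonempty ((gradedComponent I F b) ≃ₗ[K] K) ↔
      ((∀ j : Fin n, b j < 0 → j ∈ F) ∧
        ∀ d ∈ U, ∃ j : Fin n, j ∉ F ∧ b j < (d j : ℤ) ∧ 0 ≤ b j) :=
  stmt_11_general I U hgen F b
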